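/- arXiv:1412.2559 — 2 statements merged into one kernel-verified Lean document; each statement's English description precedes it below -/
import Mathlib

section
/- Let G = (V,E) be a finite simple graph, r : V → ℕ a requirement function, and S ⊆ V. Then S is a vector connectivity set for (G,r) if and only if for every non-empty set X ⊆ V such that the induced subgraph G[X] is connected and max_{x∈X} r(x) > |N_G(X)|, we have S ∩ X ≠ ∅. -/
open SimpleGraph

/-- A `v`–`S` fan of order `k` in `G`: `k` paths from `v` to vertices of `S`,
with distinct endpoints, pairwise intersecting only in `v`. -/
def HasFan {V : Type*} (G : SimpleGraph V) (v : V) (S : Set V) (k : ℕ) : Prop :=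
  ∃ (t : Fin k → V) (p : ∀ i : Fin k, G.Walk v (t i)),
    Function.Injective t ∧ (∀ i, (p i).IsPath) ∧ (∀ i, t i ∈ S) ∧
    ∀ i j, i ≠ j → ∀ x ∈ (p i).support, x ∈ (p j).support → x = v

/-- `S` is a vector connectivity set for `(G, r)`. -/
def VecConnSet {V : Type*} (G : SimpleGraph V) (r : V → ℕ) (S : Set V) : Prop :=
  ∀ v, v ∉ S → HasFan G v S (r v)

/-- The neighborhood `N_G(X)` of a set of vertices. -/
def setNbhd {V : Type*} (G : SimpleGraph V) (X : Set V) : Set V :=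
  {u | u ∉ X ∧ ∃ x ∈ X, G.Adj x u}

namespace VCMenger

variable {V : Type*}

def Sep (H : SimpleGraph V) (A B : Set V) (C : Set V) : Prop :=
  ∀ a ∈ A, ∀ b ∈ B, ∀ p : H.Walk a b, ∃ z ∈ p.support, z ∈ C

theorem Sep.symm {H : SimpleGraph V} {A B C : Set V} (h : Sep H A B C) : Sep H B A C := by
  intro a ha b hb p
  obtain ⟨z, hz, hC⟩ := h b hb a ha p.reverse
  exact ⟨z, by simpa using hz, hC⟩

/-- `T` is the vertex set of an `A`-`B` path. -/
def IsAB (H : SimpleGraph V) (A B : Set V) (T : Set V) : Prop :=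
  ∃ a ∈ A, ∃ b ∈ B, ∃ p : H.Walk a b, p.IsPath ∧ T = {z | z ∈ p.support}

theorem IsAB.symm {H : SimpleGraph V} {A B T : Set V} (h : IsAB H A B T) : IsAB H B A T := by
  obtain ⟨a, ha, b, hb, p, hp, rfl⟩ := h
  exact ⟨b, hb, a, ha, p.reverse, hp.reverse, by simp⟩

theorem IsAB.mono {H H' : SimpleGraph V} (hle : H ≤ H') {A B T : Set V} (h : IsAB H A B T) :
    IsAB H' A B T := by
  obtain ⟨a, ha, b, hb, p, hp, rfl⟩ := h
  exact ⟨a, ha, b, hb, p.mapLe hle, by simpa using hp, by simp⟩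

def Link (H : SimpleGraph V) (A B : Set V) (k : ℕ) : Prop :=
  ∃ T : Fin k → Set V, (∀ i, IsAB H A B (T i)) ∧ ∀ i j, ∀ z, z ∈ T i → z ∈ T j → i = j

theorem Link.symm {H : SimpleGraph V} {A B : Set V} {k : ℕ} (h : Link H A B k) :
    Link H B A k := by
  obtain ⟨T, h1, h2⟩ := h
  exact ⟨T, fun i => (h1 i).symm, h2⟩

/-- reindex by the ends -/
theorem Link.reindex {H : SimpleGraph V} {A : Set V} (D : Finset V)
    (h : Link H A D D.card) :
    ∃ F : V → Set V, (∀ s ∈ D, ∃ a ∈ A, ∃ p : H.Walk a s, p.IsPath ∧ F s = {z | z ∈ p.support}) ∧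
      ∀ s ∈ D, ∀ t ∈ D, ∀ z, z ∈ F s → z ∈ F t → s = t := by
  classical
  obtain ⟨T, h1, h2⟩ := h
  choose a ha b hb p hp hT using h1
  have hbT : ∀ i, b i ∈ T i := fun i => by rw [hT]; simp
  have hinj : Function.Injective (fun i => (⟨b i, hb i⟩ : D)) := by
    intro i j hij
    have : b i = b j := by simpa using hij
    exact h2 i j (b i) (hbT i) (this ▸ hbT j)
  have hbij : Function.Bijective (fun i => (⟨b i, hb i⟩ : D)) :=
    (Fintype.bijective_iff_injective_and_card _).2 ⟨hinj, by simp⟩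
  have hsur : ∀ s ∈ D, ∃ i, b i = s := fun s hs => by
    obtain ⟨i, hi⟩ := hbij.2 ⟨s, hs⟩
    exact ⟨i, by simpa using hi⟩
  refine ⟨fun s => {z | ∃ i, b i = s ∧ z ∈ T i}, ?_, ?_⟩
  · intro s hs
    obtain ⟨i, rfl⟩ := hsur s hs
    refine ⟨a i, ha i, p i, hp i, ?_⟩
    ext z
    constructor
    · rintro ⟨j, hj, hz⟩
      have : j = i := hinj (by simpa using hj)
      subst this
      rw [hT] at hz; exact hz
    · intro hz
      exact ⟨i, rfl, by rw [hT]; exact hz⟩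
  · rintro s - t - z ⟨i, rfl, hi⟩ ⟨j, rfl, hj⟩
    rw [h2 i j z hi hj]

theorem firstHit {H : SimpleGraph V} {x y : V} {W : Set V} (hx : x ∈ W) (hy : y ∈ W)
    {a b : V} (p : H.Walk a b) :
    ∃ w, (w ∈ W ∨ w = b) ∧ ∃ q : (H.deleteEdges {s(x, y)}).Walk a w,
      (∀ z ∈ q.support, z ∈ p.support) ∧ ∀ z ∈ q.support, z ∈ W → z = w := by
  induction p with
  | nil => exact ⟨_, Or.inr rfl, .nil, by simp, by simp⟩
  | @cons u v b h p ih =>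
    by_cases hu : u ∈ W
    · exact ⟨u, Or.inl hu, .nil, by simp, by simp⟩
    · obtain ⟨w, hw, q, h1, h2⟩ := ih
      have hadj : (H.deleteEdges {s(x, y)}).Adj u v := by
        rw [deleteEdges_adj]
        refine ⟨h, ?_⟩
        intro he
        simp only [Set.mem_singleton_iff, Sym2.eq_iff] at he
        rcases he with ⟨rfl, _⟩ | ⟨rfl, _⟩ <;> exact hu (by assumption)
      refine ⟨w, hw, .cons hadj q, ?_, ?_⟩
      · intro z hz
        simp only [Walk.support_cons, List.mem_cons] at hz ⊢
        exact hz.imp id (h1 z)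
      · intro z hz hzW
        simp only [Walk.support_cons, List.mem_cons] at hz
        rcases hz with rfl | hz
        · exact absurd hzW hu
        · exact h2 z hz hzW

/-- `z` reachable from `A` avoiding `C` -/
def RA (H : SimpleGraph V) (A C : Set V) (z : V) : Prop :=
  ∃ a ∈ A, ∃ p : H.Walk a z, ∀ u ∈ p.support, u ∉ C

theorem RA_contra {H : SimpleGraph V} {A B C : Set V} (h : Sep H A B C) {z : V}
    (h1 : RA H A C z) (h2 : RA H B C z) : False := by
  obtain ⟨a, ha, p, hp⟩ := h1
  obtain ⟨b, hb, q, hq⟩ := h2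
  obtain ⟨u, hu, hC⟩ := h a ha b hb (p.append q.reverse)
  rw [Walk.mem_support_append_iff] at hu
  rcases hu with hu | hu
  · exact hp u hu hC
  · exact hq u (by simpa using hu) hC

theorem sep_insert {H : SimpleGraph V} {A B C : Set V} {x y : V}
    (h : Sep (H.deleteEdges {s(x, y)}) A B C) : Sep H A B (insert x C) := by
  intro a ha b hb p
  by_contra! hcon
  have hx : x ∉ p.support := fun hx => hcon x hx (Set.mem_insert _ _)
  let q : (H.deleteEdges {s(x, y)}).Walk a b := p.toDeleteEdges _ (by
    intro e he hee
    simp only [Set.mem_singleton_iff] at hee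
    subst hee
    exact hx (Walk.fst_mem_support_of_mem_edges p he))
  obtain ⟨z, hz, hC⟩ := h a ha b hb q
  refine hcon z ?_ (Set.mem_insert_of_mem _ hC)
  simpa [q] using hz

theorem sep_step {H : SimpleGraph V} {A B C D : Set V} {x y : V}
    (h : Sep (H.deleteEdges {s(x, y)}) A B C) (hy : ¬ RA (H.deleteEdges {s(x, y)}) A C y)
    (hD : Sep (H.deleteEdges {s(x, y)}) A (insert x C) D) : Sep H A B D := by
  intro a ha b hb p
  obtain ⟨w, hw, q, h1, h2⟩ := firstHit (x := x) (y := y) (W := insert x (insert y C))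
    (by simp) (by simp) p
  by_cases hwx : w ∈ insert x C
  · obtain ⟨z, hz, hzD⟩ := hD a ha w hwx q
    exact ⟨z, h1 z hz, hzD⟩
  · exfalso
    have hav : ∀ z ∈ q.support, z ∉ C := by
      intro z hz hzC
      have := h2 z hz (by simp [hzC])
      subst this
      exact hwx (by simp [hzC])
    rcases hw with hw | rfl
    · have : w = y := by
        simp only [Set.mem_insert_iff] at hw hwx
        tauto
      subst this
      exact hy ⟨a, ha, q, hav⟩
    · obtain ⟨z, hz, hzC⟩ := h a ha w hb q
      exact hav z hz hzC

theorem exists_RA {H : SimpleGraph V} {A B C : Set V} {x y : V}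
    (h : Sep (H.deleteEdges {s(x, y)}) A B C) (hn : ¬ Sep H A B C) :
    RA (H.deleteEdges {s(x, y)}) A C x ∨ RA (H.deleteEdges {s(x, y)}) A C y := by
  unfold Sep at hn
  push Not at hn
  obtain ⟨a, ha, b, hb, p, hp⟩ := hn
  obtain ⟨w, hw, q, h1, h2⟩ := firstHit (x := x) (y := y) (W := {x, y}) (by simp) (by simp) p
  have hav : ∀ z ∈ q.support, z ∉ C := fun z hz => hp z (h1 z hz)
  rcases hw with (rfl | rfl) | rfl
  · exact Or.inl ⟨a, ha, q, hav⟩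
  · exact Or.inr ⟨a, ha, q, hav⟩
  · obtain ⟨z, hz, hzC⟩ := h a ha w hb q
    exact absurd hzC (hav z hz)

/-- In a crossing of a path from `A` to `s` and a path from `B` to `t`. -/
theorem crossing {H : SimpleGraph V} {A B C : Set V} (h : Sep H A B C)
    {a b s t z : V} (ha : a ∈ A) (hb : b ∈ B) (p : H.Walk a s) (hp : p.IsPath)
    (q : H.Walk b t) (hq : q.IsPath)
    (hpC : ∀ u ∈ p.support, u ∈ C → u = s) (hqC : ∀ u ∈ q.support, u ∈ C → u = t)
    (hzp : z ∈ p.support) (hzq : z ∈ q.support) : z ∈ C := by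
  classical
  by_contra hz
  refine RA_contra h (z := z) ⟨a, ha, p.takeUntil z hzp, ?_⟩ ⟨b, hb, q.takeUntil z hzq, ?_⟩
  · intro u hu hC
    have := hpC u (p.support_takeUntil_subset_support hzp hu) hC
    subst this
    exact Walk.endpoint_notMem_support_takeUntil hp hzp (by rintro rfl; exact hz hC) hu
  · intro u hu hC
    have := hqC u (q.support_takeUntil_subset_support hzq hu) hC
    subst this
    exact Walk.endpoint_notMem_support_takeUntil hq hzq (by rintro rfl; exact hz hC) hu

theorem paste {H : SimpleGraph V} {A B : Set V} {C : Finset V} {x y : V} [DecidableEq V]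
    (hxy : H.Adj x y)
    (h : Sep (H.deleteEdges {s(x, y)}) A B C) (hx : x ∉ C) (hy : y ∉ C)
    (h1 : Link (H.deleteEdges {s(x, y)}) A (insert x C : Finset V) (insert x C).card)
    (h2 : Link (H.deleteEdges {s(x, y)}) B (insert y C : Finset V) (insert y C).card) :
    Link H A B (insert x C).card := by
  obtain ⟨P, hP, hPd⟩ := h1.reindex
  obtain ⟨Q, hQ, hQd⟩ := h2.reindex
  have hle : H.deleteEdges {s(x, y)} ≤ H := deleteEdges_le _
  have hcross : ∀ s ∈ insert x C, ∀ t ∈ insert y C, ∀ z, z ∈ P s → z ∈ Q t →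
      z ∈ C ∧ z = s ∧ z = t := by
    intro s hs t ht z hzs hzt
    have hPs : ∀ u ∈ P s, u ∈ C → u = s := by
      intro u hu huC
      obtain ⟨_, _, p, _, hp⟩ := hP u (Finset.mem_insert_of_mem huC)
      exact hPd u (Finset.mem_insert_of_mem huC) s hs u (by rw [hp]; simp) hu
    have hQt : ∀ u ∈ Q t, u ∈ C → u = t := by
      intro u hu huC
      obtain ⟨_, _, p, _, hp⟩ := hQ u (Finset.mem_insert_of_mem huC)
      exact hQd u (Finset.mem_insert_of_mem huC) t ht u (by rw [hp]; simp) hu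
    have hz : z ∈ C := by
      obtain ⟨a, ha, p, hp, hpe⟩ := hP s hs
      obtain ⟨b, hb, q, hq, hqe⟩ := hQ t ht
      rw [hpe] at hPs hzs
      rw [hqe] at hQt hzt
      exact crossing h ha hb p hp q hq hPs hQt hzs hzt
    exact ⟨hz, hPs z hzs hz, hQt z hzt hz⟩
  let σ : V → V := fun s => if s = x then y else s
  have hσ : ∀ s ∈ insert x C, σ s ∈ insert y C := by
    intro s hs
    simp only [σ]
    split_ifs with h
    · simp
    · exact Finset.mem_insert_of_mem (Finset.mem_of_mem_insert_of_ne hs h)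
  have hσi : ∀ s ∈ insert x C, ∀ t ∈ insert x C, σ s = σ t → s = t := by
    intro s hs t ht hst
    simp only [σ] at hst
    simp only [Finset.mem_insert] at hs ht
    split_ifs at hst <;> grind
  have hR : ∀ s ∈ insert x C, ∃ T, IsAB H A B T ∧ T ⊆ P s ∪ Q (σ s) := by
    intro s hs
    obtain ⟨a, ha, p, hp, hpe⟩ := hP s hs
    obtain ⟨b, hb, q, hq, hqe⟩ := hQ (σ s) (hσ s hs)
    obtain ⟨m, hm⟩ : ∃ m : H.Walk s (σ s), ∀ z ∈ m.support, z = s ∨ z = σ s := by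
      by_cases hsx : s = x
      · subst hsx
        have : σ s = y := by simp [σ]
        rw [this]
        exact ⟨.cons hxy .nil, by simp⟩
      · have : σ s = s := by simp [σ, hsx]
        rw [this]
        exact ⟨.nil, by simp⟩
    let w := (p.mapLe hle).append (m.append (q.mapLe hle).reverse)
    refine ⟨{z | z ∈ w.bypass.support}, ⟨a, ha, b, hb, w.bypass, w.bypass_isPath, rfl⟩, ?_⟩
    intro z hz
    have hz : z ∈ w.support := w.support_bypass_subset_support hz
    simp only [w, Walk.mem_support_append_iff] at hz
    rw [hpe, hqe]
    rcases hz with hz | hz | hz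
    · left; simpa using hz
    · rcases hm z hz with rfl | rfl
      · left; simp
      · right; simp
    · right; simpa using hz
  choose! R hR1 hR2 using hR
  let e := (insert x C).equivFin
  refine ⟨fun i => R (e.symm i), fun i => hR1 _ (e.symm i).2, ?_⟩
  have key : ∀ s ∈ insert x C, ∀ t ∈ insert x C, ∀ z, z ∈ P s → z ∈ Q (σ t) → s = t := by
    intro s hs t ht z hz1 hz2
    obtain ⟨hzC, rfl, h4⟩ := hcross s hs (σ t) (hσ t ht) z hz1 hz2
    simp only [σ] at h4
    split_ifs at h4 with h5
    · subst h4; exact absurd hzC hy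
    · exact h4
  intro i j z hi hj
  have hs := (e.symm i).2
  have ht := (e.symm j).2
  suffices ((e.symm i : V) = (e.symm j : V)) from e.symm.injective (Subtype.ext this)
  rcases hR2 _ hs hi with hi | hi <;> rcases hR2 _ ht hj with hj | hj
  · exact hPd _ hs _ ht z hi hj
  · exact key _ hs _ ht z hi hj
  · exact (key _ ht _ hs z hj hi).symm
  · exact hσi _ hs _ ht (hQd _ (hσ _ hs) _ (hσ _ ht) z hi hj)

theorem menger [Finite V] (H : SimpleGraph V) : ∀ (A B : Set V) (k : ℕ),
    (∀ C : Finset V, Sep H A B C → k ≤ C.card) → Link H A B k := by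
  classical
  have := Fintype.ofFinite V
  induction H using WellFoundedLT.induction with
  | ind H ih =>
  intro A B k hk
  by_cases hE : ∃ x y, H.Adj x y
  · obtain ⟨x, y, hxy⟩ := hE
    have hlt : H.deleteEdges {s(x, y)} < H := by
      refine lt_of_le_of_ne (deleteEdges_le _) ?_
      intro he
      rw [← he] at hxy
      simp at hxy
    by_cases hall : ∀ C : Finset V, Sep (H.deleteEdges {s(x, y)}) A B C → k ≤ C.card
    · obtain ⟨T, h1, h2⟩ := ih _ hlt A B k hall
      exact ⟨T, fun i => (h1 i).mono hlt.le, h2⟩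
    · push Not at hall
      obtain ⟨C, hC, hCk⟩ := hall
      have hnS : ¬ Sep H A B C := fun h => absurd (hk C h) (by omega)
      have main : ∀ x y, H.Adj x y → H.deleteEdges {s(x, y)} < H →
          Sep (H.deleteEdges {s(x, y)}) A B C →
          ¬ RA (H.deleteEdges {s(x, y)}) A C y → ¬ RA (H.deleteEdges {s(x, y)}) B C x →
          Link H A B k := by
        intro x y hxy hlt hC hy hx
        have hins : ∀ u, Sep H A B (insert u (C : Set V)) → u ∉ C ∧ (insert u C).card = k := by
          intro u hu
          have h1 := hk (insert u C) (by simpa using hu)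
          have h2 := Finset.card_insert_le u C
          refine ⟨fun hu => ?_, by omega⟩
          rw [Finset.insert_eq_of_mem hu] at h1
          omega
        have hsw : s(x, y) = s(y, x) := Sym2.eq_swap
        obtain ⟨hxC, hxk⟩ := hins x (sep_insert hC)
        obtain ⟨hyC, hyk⟩ := hins y (sep_insert (y := x) (hsw ▸ hC))
        have l1 : Link (H.deleteEdges {s(x, y)}) A (insert x C : Finset V) (insert x C).card := by
          refine ih _ hlt _ _ _ ?_
          intro D hD
          rw [hxk]
          exact hk D (sep_step hC hy (by simpa using hD))
        have l2 : Link (H.deleteEdges {s(x, y)}) B (insert y C : Finset V) (insert y C).card := by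
          refine ih _ hlt _ _ _ ?_
          intro D hD
          rw [hyk]
          rw [hsw] at hD hx hC
          exact hk D (sep_step hC.symm hx (by simpa using hD)).symm
        rw [← hxk]
        exact paste hxy hC hxC hyC l1 l2
      have hsw : s(x, y) = s(y, x) := Sym2.eq_swap
      have e1 := exists_RA hC hnS
      have e2 := exists_RA hC.symm (fun h => hnS h.symm)
      have c1 := fun h1 h2 => RA_contra hC (z := x) h1 h2
      have c2 := fun h1 h2 => RA_contra hC (z := y) h1 h2
      by_cases h0 : RA (H.deleteEdges {s(x, y)}) A C y ∨ RA (H.deleteEdges {s(x, y)}) B C x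
      · refine main y x hxy.symm (hsw ▸ hlt) (hsw ▸ hC) ?_ ?_ <;> rw [← hsw] <;> tauto
      · push Not at h0
        exact main x y hxy hlt hC h0.1 h0.2
  · push Not at hE
    have hAB : k ≤ (A ∩ B).toFinset.card := by
      apply hk
      intro a ha b hb p
      cases p with
      | nil => exact ⟨a, by simp, by simp [ha, hb]⟩
      | cons h p => exact absurd h (hE _ _)
    let e := (A ∩ B).toFinset.equivFin
    let f : Fin k → V := fun i => e.symm (Fin.castLE hAB i)
    have hf : ∀ i, f i ∈ A ∩ B := fun i => by
      simpa using (e.symm (Fin.castLE hAB i)).2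
    refine ⟨fun i => {f i}, fun i => ⟨f i, (hf i).1, f i, (hf i).2, .nil, by simp, by simp⟩, ?_⟩
    rintro i j z rfl hj
    have : e.symm (Fin.castLE hAB i) = e.symm (Fin.castLE hAB j) := Subtype.ext hj
    simpa using this

/-- `G` with all edges at `v` removed -/
def del (G : SimpleGraph V) (v : V) : SimpleGraph V where
  Adj a b := G.Adj a b ∧ a ≠ v ∧ b ≠ v
  symm := ⟨fun _ _ h => ⟨h.1.symm, h.2.2, h.2.1⟩⟩
  loopless := ⟨fun a h => G.loopless.irrefl a h.1⟩

theorem del_le (G : SimpleGraph V) (v : V) : del G v ≤ G := fun _ _ h => h.1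

theorem del_avoid {G : SimpleGraph V} {v a b : V} (p : (del G v).Walk a b) (ha : a ≠ v) :
    v ∉ p.support := by
  induction p with
  | nil => simpa using ha.symm
  | cons h p ih =>
    simp only [Walk.support_cons, List.mem_cons, not_or]
    exact ⟨ha.symm, ih h.2.2⟩

theorem to_del {G : SimpleGraph V} {v a b : V} (p : G.Walk a b) (hv : v ∉ p.support) :
    ∃ q : (del G v).Walk a b, q.support = p.support := by
  induction p with
  | nil => exact ⟨.nil, by simp⟩
  | cons h p ih =>
    simp only [Walk.support_cons, List.mem_cons, not_or] at hv
    obtain ⟨q, hq⟩ := ih hv.2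
    have : _ ≠ v := fun he => hv.2 (he ▸ p.start_mem_support)
    have hadj : (del G v).Adj _ _ := ⟨h, Ne.symm hv.1, this⟩
    exact ⟨.cons hadj q, by simp [hq]⟩

theorem fan_of_link {G : SimpleGraph V} {v : V} {S : Set V} {k : ℕ}
    (h : Link (del G v) (G.neighborSet v) S k) : HasFan G v S k := by
  obtain ⟨T, h1, h2⟩ := h
  choose a ha b hb p hp hT using h1
  have hadj : ∀ i, G.Adj v (a i) := ha
  have hv : ∀ i, v ∉ (p i).support := fun i => del_avoid _ (G.ne_of_adj (ha i)).symm
  refine ⟨b, fun i => .cons (hadj i) ((p i).mapLe (del_le G v)), ?_, ?_, hb, ?_⟩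
  · intro i j hij
    refine h2 i j (b i) ?_ ?_
    · rw [hT]; simp
    · rw [hT, hij]; simp
  · intro i
    rw [Walk.cons_isPath_iff]
    exact ⟨by simpa using hp i, by simpa using hv i⟩
  · intro i j hij x hx hy
    by_contra hne
    simp only [Walk.support_cons, List.mem_cons, hne, false_or] at hx hy
    refine hij (h2 i j x ?_ ?_)
    · rw [hT]; simpa using hx
    · rw [hT]; simpa using hy

theorem conn_set {G : SimpleGraph V} {v : V} {C : Set V} (hv : v ∉ C) :
    (G.induce {u | ∃ p : G.Walk v u, ∀ z ∈ p.support, z ∉ C}).Connected := by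
  classical
  refine induce_connected_of_patches v ⟨.nil, by simpa using hv⟩ ?_
  rintro u ⟨p, hp⟩
  refine ⟨{z | z ∈ p.support}, ?_, by simp, by simp, ?_⟩
  · intro z hz
    exact ⟨p.takeUntil z hz, fun w hw => hp w (p.support_takeUntil_subset_support hz hw)⟩
  · exact (p.connected_induce_support).preconnected _ _

end VCMenger

open VCMenger in
theorem stmt_0 {V : Type*} [Fintype V] (G : SimpleGraph V) (r : V → ℕ) (S : Set V) :
    VecConnSet G r S ↔
      ∀ X : Set V, X.Nonempty → (G.induce X).Connected →
        (∃ x ∈ X, (setNbhd G X).ncard < r x) → (S ∩ X).Nonempty := by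
  classical
  constructor
  · rintro hS X - - ⟨x, hxX, hx⟩
    by_contra hne
    rw [Set.not_nonempty_iff_eq_empty] at hne
    have hdis : ∀ s ∈ S, s ∉ X := fun s hs hX => by
      have : s ∈ S ∩ X := ⟨hs, hX⟩
      rw [hne] at this; exact this
    obtain ⟨t, p, ht, hp, htS, hd⟩ := hS x (fun h => hdis x h hxX)
    have hb : ∀ i, ∃ z ∈ (p i).support, z ∈ setNbhd G X := by
      intro i
      obtain ⟨d, hd, h1, h2⟩ := (p i).exists_boundary_dart X hxX (hdis _ (htS i))
      exact ⟨d.snd, (p i).dart_snd_mem_support_of_mem_darts hd, h2, d.fst, h1, d.adj⟩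
    choose f hf hfX using hb
    have hinj : Function.Injective f := by
      intro i j hij
      by_contra hne
      have := hd i j hne (f i) (hf i) (hij ▸ hf j)
      exact (hfX i).1 (this ▸ hxX)
    have h1 : (Set.range f).ncard ≤ (setNbhd G X).ncard :=
      Set.ncard_le_ncard (by rintro _ ⟨i, rfl⟩; exact hfX i) (Set.toFinite _)
    have h2 : (Set.range f).ncard = r x := by
      rw [← Set.image_univ, Set.ncard_image_of_injective _ hinj]
      simp [Set.ncard_univ]
    omega
  · intro h v hv
    apply fan_of_link
    apply menger
    intro C hC
    by_contra! hlt
    have hvC : v ∉ ((C.erase v : Finset V) : Set V) := by simp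
    obtain ⟨s, hsS, p, hp⟩ := h {u | ∃ p : G.Walk v u, ∀ z ∈ p.support,
        z ∉ ((C.erase v : Finset V) : Set V)} ⟨v, .nil, by simp⟩ (conn_set (G := G) hvC)
      ⟨v, ⟨.nil, by simp⟩, by
        refine lt_of_le_of_lt ?_ hlt
        refine le_trans (Set.ncard_le_ncard (t := ((C.erase v : Finset V) : Set V)) ?_
          (Set.toFinite _)) ?_
        · rintro u ⟨hu, x, ⟨p, hp⟩, hxu⟩
          by_contra huC
          refine hu ⟨p.concat hxu, ?_⟩
          intro z hz
          rw [Walk.support_concat] at hz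
          simp only [List.mem_append, List.mem_singleton] at hz
          rcases hz with hz | rfl
          · exact hp z hz
          · exact huC
        · rw [Set.ncard_coe_finset]
          exact Finset.card_erase_le⟩
    have hp' : ∀ z ∈ p.bypass.support, z ∉ ((C.erase v : Finset V) : Set V) :=
      fun z hz => hp z (p.support_bypass_subset_support hz)
    have hpath := p.bypass_isPath
    generalize p.bypass = q at hp' hpath
    cases q with
    | nil => exact hv hsS
    | cons hadj q =>
      rw [Walk.cons_isPath_iff] at hpath
      obtain ⟨w, hw⟩ := to_del q hpath.2
      obtain ⟨z, hz, hzC⟩ := hC _ hadj _ hsS w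
      rw [hw] at hz
      refine hp' z (by simp [hz]) ?_
      have : z ≠ v := fun he => hpath.2 (he ▸ hz)
      simpa [this] using hzC
end

section
/- Let G be a graph, x a vertex, S a set of vertices with x ∉ S, and suppose x is not k-linked to S. Then there exists a set C ⊆ V(G) \ {x} with |C| < k such that the connected component X of G − C containing x satisfies S ∩ X = ∅ and N_G(X) ⊆ C; in particular |N_G(X)| < k. -/
open SimpleGraph

/-- A fan from `x` to `B` with set of ends `T`; the path to `t` lives inside `s t`. -/
def FanOn {V : Type*} (G : SimpleGraph V) (x : V) (B : Set V) (T : Finset V)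
    (s : V → Set V) : Prop :=
  ∀ t ∈ T, t ∈ B ∧ (∃ w : G.Walk x t, ∀ z ∈ w.support, z ∈ s t) ∧
    (∀ z ∈ s t, z ∈ B → z = t) ∧
    ∀ t' ∈ T, t ≠ t' → ∀ z ∈ s t, z ∈ s t' → z = x

theorem path_split {V : Type*} [DecidableEq V] {G : SimpleGraph V} {a b u : V}
    (p : G.Walk a b) (hp : p.IsPath) (hu : u ∈ p.support) (z : V)
    (h1 : z ∈ (p.takeUntil u hu).support) (h2 : z ∈ (p.dropUntil u hu).support) : z = u := by
  have h := hp.support_nodup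
  rw [← p.take_spec hu, Walk.support_append, List.nodup_append] at h
  by_contra hne
  have h3 : z ∈ (p.dropUntil u hu).support.tail := by
    rw [Walk.mem_support_iff] at h2
    tauto
  exact h.2.2 z h1 z h3 rfl

theorem short_walk {V : Type*} [DecidableEq V] (G : SimpleGraph V) (A B C : Set V)
    (h : ∃ a ∈ A, ∃ b ∈ B, ∃ w : G.Walk a b, ∀ z ∈ w.support, z ∉ C) :
    ∃ a ∈ A, ∃ b ∈ B, ∃ w : G.Walk a b, w.IsPath ∧ (∀ z ∈ w.support, z ∉ C) ∧
      (∀ z ∈ w.support, z ∈ A → z = a) ∧ (∀ z ∈ w.support, z ∈ B → z = b) := by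
  have h' : ∃ n, ∃ a ∈ A, ∃ b ∈ B, ∃ w : G.Walk a b, (∀ z ∈ w.support, z ∉ C) ∧
      w.length = n := by
    obtain ⟨a, ha, b, hb, w, hw⟩ := h
    exact ⟨_, a, ha, b, hb, w, hw, rfl⟩
  classical
  obtain ⟨a, ha, b, hb, w, hw, hn⟩ := Nat.find_spec h'
  have hmin : ∀ a' ∈ A, ∀ b' ∈ B, ∀ w' : G.Walk a' b', (∀ z ∈ w'.support, z ∉ C) →
      w.length ≤ w'.length := by
    intro a' ha' b' hb' w' hw'
    rw [hn]
    exact Nat.find_min' h' ⟨a', ha', b', hb', w', hw', rfl⟩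
  have key : ∀ z (hz : z ∈ w.support),
      (w.takeUntil z hz).length + (w.dropUntil z hz).length = w.length := by
    intro z hz
    rw [← Walk.length_append, w.take_spec hz]
  refine ⟨a, ha, b, hb, w.bypass, w.bypass_isPath,
    fun z hz => hw z (w.support_bypass_subset_support hz), ?_, ?_⟩
  · intro z hz hzA
    have hz := w.support_bypass_subset_support hz
    have h1 := hmin z hzA b hb (w.dropUntil z hz)
      (fun y hy => hw y (w.support_dropUntil_subset_support hz hy))
    have h2 := key z hz
    exact (Walk.eq_of_length_eq_zero (p := w.takeUntil z hz) (by omega)).symm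
  · intro z hz hzB
    have hz := w.support_bypass_subset_support hz
    have h1 := hmin a ha z hzB (w.takeUntil z hz)
      (fun y hy => hw y (w.support_takeUntil_subset_support hz hy))
    have h2 := key z hz
    exact (Walk.eq_of_length_eq_zero (p := w.dropUntil z hz) (by omega))

theorem combine {V : Type*} [DecidableEq V] (G : SimpleGraph V) (x : V) (B B' : Set V)
    (hBB : B ⊆ B') (T : Finset V) (s : V → Set V) (u₁ u₂ c₁ c₂ : V)
    (hu : u₁ ≠ u₂) (hu₁ : u₁ ∉ T) (hu₂ : u₂ ∉ T)
    (hF : FanOn G x B' (insert u₁ (insert u₂ T)) s) (hTB : ∀ t ∈ T, t ∈ B)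
    (hc₁ : c₁ ∈ B) (hc₂ : c₂ ∈ B)
    (q₁ : G.Walk u₁ c₁) (q₂ : G.Walk u₂ c₂)
    (hq₁ : ∀ z ∈ q₁.support, z ∈ B' ∧ z ∉ T ∧ z ∉ q₂.support ∧ (z ∈ B → z = c₁))
    (hq₂ : ∀ z ∈ q₂.support, z ∈ B' ∧ z ∉ T ∧ (z ∈ B → z = c₂)) :
    ∃ s', FanOn G x B (insert c₁ (insert c₂ T)) s' := by
  have e1 := q₁.end_mem_support
  have e2 := q₂.end_mem_support
  have b1 := q₁.start_mem_support
  have b2 := q₂.start_mem_support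
  have hcc : c₁ ≠ c₂ := fun h => (hq₁ c₁ e1).2.2.1 (h ▸ e2)
  have hc1T := (hq₁ c₁ e1).2.1
  have hc2T := (hq₂ c₂ e2).2.1
  obtain ⟨-, ⟨w1, hw1⟩, f1, g1⟩ := hF u₁ (by simp)
  obtain ⟨-, ⟨w2, hw2⟩, f2, g2⟩ := hF u₂ (by simp)
  have g12 := g1 u₂ (by simp) hu
  have S1 : ∀ z, (z ∈ s u₁ ∨ z ∈ q₁.support) → (z ∈ s u₂ ∨ z ∈ q₂.support) → z = x := by
    rintro z (h | h) (h' | h')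
    · exact g12 z h h'
    · obtain rfl := f1 z h (hq₂ z h').1
      exact absurd h' (hq₁ _ b1).2.2.1
    · obtain rfl := f2 z h' (hq₁ z h).1
      exact absurd b2 (hq₁ _ h).2.2.1
    · exact absurd h' (hq₁ _ h).2.2.1
  have S2 : ∀ t ∈ T, ∀ z ∈ s t, (z ∈ s u₁ ∨ z ∈ q₁.support) → z = x := by
    rintro t ht z hz (h | h)
    · exact g1 t (by simp [ht]) (fun e => hu₁ (e ▸ ht)) z h hz
    · obtain rfl := (hF t (by simp [ht])).2.2.1 z hz (hq₁ z h).1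
      exact absurd ht (hq₁ _ h).2.1
  have S3 : ∀ t ∈ T, ∀ z ∈ s t, (z ∈ s u₂ ∨ z ∈ q₂.support) → z = x := by
    rintro t ht z hz (h | h)
    · exact g2 t (by simp [ht]) (fun e => hu₂ (e ▸ ht)) z h hz
    · obtain rfl := (hF t (by simp [ht])).2.2.1 z hz (hq₂ z h).1
      exact absurd ht (hq₂ _ h).2.1
  let s' : V → Set V := fun t => if t = c₁ then {z | z ∈ s u₁ ∨ z ∈ q₁.support} else
    if t = c₂ then {z | z ∈ s u₂ ∨ z ∈ q₂.support} else s t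
  have s1 : s' c₁ = {z | z ∈ s u₁ ∨ z ∈ q₁.support} := by simp [s']
  have s2 : s' c₂ = {z | z ∈ s u₂ ∨ z ∈ q₂.support} := by simp [s', hcc.symm]
  have s3 : ∀ t ∈ T, s' t = s t := by
    intro t ht
    have h1 : t ≠ c₁ := fun e => hc1T (e ▸ ht)
    have h2 : t ≠ c₂ := fun e => hc2T (e ▸ ht)
    simp [s', h1, h2]
  refine ⟨s', ?_⟩
  intro t ht
  simp only [Finset.mem_insert] at ht
  refine ⟨?_, ?_, ?_, ?_⟩
  · rcases ht with rfl | rfl | ht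
    exacts [hc₁, hc₂, hTB _ ht]
  · rcases ht with rfl | rfl | ht
    · refine ⟨w1.append q₁, fun z hz => ?_⟩
      rw [s1]
      exact (Walk.mem_support_append_iff _ _).1 hz |>.imp (hw1 z) id
    · refine ⟨w2.append q₂, fun z hz => ?_⟩
      rw [s2]
      exact (Walk.mem_support_append_iff _ _).1 hz |>.imp (hw2 z) id
    · rw [s3 t ht]
      exact (hF t (by simp [ht])).2.1
  · intro z hz hzB
    rcases ht with rfl | rfl | ht
    · rw [s1] at hz
      rcases hz with hz | hz
      · obtain rfl := f1 z hz (hBB hzB)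
        exact (hq₁ _ b1).2.2.2 hzB
      · exact (hq₁ _ hz).2.2.2 hzB
    · rw [s2] at hz
      rcases hz with hz | hz
      · obtain rfl := f2 z hz (hBB hzB)
        exact (hq₂ _ b2).2.2 hzB
      · exact (hq₂ _ hz).2.2 hzB
    · rw [s3 t ht] at hz
      exact (hF t (by simp [ht])).2.2.1 z hz (hBB hzB)
  · intro t' ht' hne z hz hz'
    simp only [Finset.mem_insert] at ht'
    rcases ht with e | e | ht <;> rcases ht' with e' | e' | ht'
    · exact absurd (e.trans e'.symm) hne
    · rw [e, s1] at hz; rw [e', s2] at hz'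
      exact S1 z hz hz'
    · rw [e, s1] at hz; rw [s3 _ ht'] at hz'
      exact S2 t' ht' z hz' hz
    · rw [e, s2] at hz; rw [e', s1] at hz'
      exact S1 z hz' hz
    · exact absurd (e.trans e'.symm) hne
    · rw [e, s2] at hz; rw [s3 _ ht'] at hz'
      exact S3 t' ht' z hz' hz
    · rw [s3 _ ht] at hz; rw [e', s1] at hz'
      exact S2 t ht z hz hz'
    · rw [s3 _ ht] at hz; rw [e', s2] at hz'
      exact S3 t ht z hz hz'
    · rw [s3 _ ht] at hz; rw [s3 _ ht'] at hz'
      exact (hF t (by simp [ht])).2.2.2 t' (by simp [ht']) hne z hz hz'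

theorem augment {V : Type*} [Fintype V] [DecidableEq V] (G : SimpleGraph V) (x : V) (k : ℕ) :
    ∀ (n : ℕ) (B : Set V), Bᶜ.ncard = n → x ∉ B →
    (∀ C : Finset V, x ∉ C → C.card < k →
      ∃ b ∈ B, ∃ w : G.Walk x b, ∀ z ∈ w.support, z ∉ C) →
    ∀ (T : Finset V) (s : V → Set V), T.card < k → FanOn G x B T s →
    ∃ (T' : Finset V) (s' : V → Set V), T ⊆ T' ∧ T'.card = T.card + 1 ∧ FanOn G x B T' s' := by
  intro n
  induction n using Nat.strong_induction_on with
  | _ n ih =>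
  intro B hBn hxB hsep T s hTk hF
  have hTB : ∀ t ∈ T, t ∈ B := fun t ht => (hF t ht).1
  have hW : ∀ t : T, ∃ w : G.Walk x t, w.IsPath ∧ ∀ z ∈ w.support, z ∈ s t := by
    intro t
    obtain ⟨w, hw⟩ := (hF t t.2).2.1
    exact ⟨w.bypass, w.bypass_isPath, fun z hz => hw z (w.support_bypass_subset_support hz)⟩
  choose W hWp hWs using hW
  have hWB : ∀ t : T, ∀ z ∈ (W t).support, z ∈ B → z = t := fun t z hz =>
    (hF t t.2).2.2.1 z (hWs t z hz)
  have hWd : ∀ t t' : T, t ≠ t' → ∀ z ∈ (W t).support, z ∈ (W t').support → z = x :=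
    fun t t' hne z hz hz' => (hF t t.2).2.2.2 t' t'.2 (fun e => hne (Subtype.ext e)) z
      (hWs t z hz) (hWs t' z hz')
  let A : Set V := {z | z = x ∨ ∃ t : T, z ∈ (W t).support}
  obtain ⟨a, haA, b, hbB, r, hrp, hrT, hrA, hrB⟩ := short_walk G A B (T : Set V) (by
    obtain ⟨b, hb, w, hw⟩ := hsep T (fun h => hxB (hTB x h)) hTk
    exact ⟨x, Or.inl rfl, b, hb, w, fun z hz => by simpa using hw z hz⟩)
  have hbT : b ∉ T := by simpa using hrT b r.end_mem_support
  have haT : a ∉ T := by simpa using hrT a r.start_mem_support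
  by_cases hax : a = x
  · subst hax
    refine ⟨insert b T, fun t => if h : t ∈ T then {z | z ∈ (W ⟨t, h⟩).support} else
      {z | z ∈ r.support}, Finset.subset_insert _ _, Finset.card_insert_of_notMem hbT, ?_⟩
    intro t ht
    rw [Finset.mem_insert] at ht
    by_cases htT : t ∈ T
    · simp only [htT, dite_true]
      refine ⟨hTB t htT, ⟨W ⟨t, htT⟩, fun z hz => hz⟩, hWB ⟨t, htT⟩, ?_⟩
      intro t' ht' hne z hz hz'
      by_cases htT' : t' ∈ T
      · simp only [htT', dite_true] at hz'
        exact hWd ⟨t, htT⟩ ⟨t', htT'⟩ (fun e => hne (congrArg Subtype.val e)) z hz hz'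
      · simp only [htT', dite_false] at hz'
        exact hrA z hz' (Or.inr ⟨_, hz⟩)
    · have : t = b := by tauto
      subst this
      simp only [htT, dite_false]
      refine ⟨hbB, ⟨r, fun z hz => hz⟩, hrB, ?_⟩
      intro t' ht' hne z hz hz'
      by_cases htT' : t' ∈ T
      · simp only [htT', dite_true] at hz'
        exact hrA z hz (Or.inr ⟨_, hz'⟩)
      · rw [Finset.mem_insert] at ht'
        exact absurd (by tauto) hne
  obtain ⟨t0, hat⟩ : ∃ t : T, a ∈ (W t).support := haA.resolve_left hax
  have haB : a ∉ B := fun h => haT (hWB t0 a hat h ▸ t0.2)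
  set dr := (W t0).dropUntil a hat with hdr
  set tk := (W t0).takeUntil a hat with htk
  have hdW : ∀ z ∈ dr.support, z ∈ (W t0).support := fun z hz =>
    (W t0).support_dropUntil_subset_support hat hz
  have htW : ∀ z ∈ tk.support, z ∈ (W t0).support := fun z hz =>
    (W t0).support_takeUntil_subset_support hat hz
  have hsplit : ∀ z ∈ tk.support, z ∈ dr.support → z = a := fun z h1 h2 =>
    path_split (W t0) (hWp t0) hat z h1 h2
  have hdp : dr.IsPath := (hWp t0).dropUntil hat
  have hxd : x ∉ dr.support := fun h => hax (hsplit x tk.start_mem_support h).symm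
  have hxr : x ∉ r.support := fun h => hax (hrA x h (Or.inl rfl)).symm
  have hdrr : ∀ z ∈ dr.support, z ∈ r.support → z = a := fun z h1 h2 =>
    hrA z h2 (Or.inr ⟨t0, hdW z h1⟩)
  have hdB : ∀ z ∈ dr.support, z ∈ B → z = t0 := fun z h1 h2 => hWB t0 z (hdW z h1) h2
  let B' : Set V := {z | z ∈ B ∨ z ∈ dr.support ∨ z ∈ r.support}
  have hBB : B ⊆ B' := fun z hz => Or.inl hz
  have hxB' : x ∉ B' := by
    rintro (h | h | h)
    exacts [hxB h, hxd h, hxr h]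
  have hlt : B'ᶜ.ncard < n := by
    rw [← hBn]
    apply Set.ncard_lt_ncard _ (Set.toFinite _)
    refine ⟨Set.compl_subset_compl.2 hBB, fun h => ?_⟩
    exact h (show a ∈ Bᶜ from haB) (Or.inr (Or.inl dr.start_mem_support))
  have haE : a ∉ T.erase t0 := fun h => haT (Finset.mem_of_mem_erase h)
  have hcard0 : (insert a (T.erase t0)).card = T.card := by
    rw [Finset.card_insert_of_notMem haE, Finset.card_erase_add_one t0.2]
  have hdE : ∀ z ∈ dr.support, z ∉ T.erase t0 := by
    intro z hz hzE
    rw [Finset.mem_erase] at hzE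
    exact hzE.1 (hdB z hz (hTB z hzE.2))
  have hrE : ∀ z ∈ r.support, z ∉ T.erase t0 := by
    intro z hz hzE
    exact hrT z hz (by simpa using Finset.mem_of_mem_erase hzE)
  have hF0 : FanOn G x B' (insert a (T.erase t0))
      (fun t => if h : t ∈ T then {z | z ∈ (W ⟨t, h⟩).support} else {z | z ∈ tk.support}) := by
    intro t ht
    rw [Finset.mem_insert] at ht
    by_cases htT : t ∈ T
    · have hne0 : (⟨t, htT⟩ : T) ≠ t0 := by
        rintro rfl
        rcases ht with h | h
        · exact haT (h ▸ htT)
        · simp at h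
      simp only [htT, dite_true]
      refine ⟨hBB (hTB t htT), ⟨W ⟨t, htT⟩, fun z hz => hz⟩, ?_, ?_⟩
      · rintro z hz (h | h | h)
        · exact hWB ⟨t, htT⟩ z hz h
        · have := hWd _ _ hne0 z hz (hdW z h)
          exact absurd (this ▸ h) hxd
        · have h1 := hrA z h (Or.inr ⟨_, hz⟩)
          have := hWd _ _ hne0 z hz (h1 ▸ hat)
          exact absurd (this ▸ h) hxr
      · intro t' ht' hne z hz hz'
        by_cases htT' : t' ∈ T
        · simp only [htT', dite_true] at hz'
          exact hWd ⟨t, htT⟩ ⟨t', htT'⟩ (fun e => hne (congrArg Subtype.val e)) z hz hz'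
        · simp only [htT', dite_false] at hz'
          exact hWd _ _ hne0 z hz (htW z hz')
    · have : t = a := by
        rcases ht with h | h
        · exact h
        · exact absurd (Finset.mem_of_mem_erase h) htT
      subst this
      simp only [htT, dite_false]
      refine ⟨Or.inr (Or.inl dr.start_mem_support), ⟨tk, fun z hz => hz⟩, ?_, ?_⟩
      · rintro z hz (h | h | h)
        · have h1 := hWB t0 z (htW z hz) h
          exact hsplit z hz (h1 ▸ dr.end_mem_support)
        · exact hsplit z hz h
        · exact hrA z h (Or.inr ⟨t0, htW z hz⟩)
      · intro t' ht' hne z hz hz'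
        rw [Finset.mem_insert] at ht'
        have htE : t' ∈ T.erase t0 := ht'.resolve_left (fun e => hne e.symm)
        have htT' : t' ∈ T := Finset.mem_of_mem_erase htE
        simp only [htT', dite_true] at hz'
        refine hWd ⟨t', htT'⟩ t0 ?_ z hz' (htW z hz)
        rintro rfl
        simp at htE
  obtain ⟨T1, s1, hsub, hcard, hF1⟩ := ih _ hlt B' rfl hxB' (by
    intro C hxC hC
    obtain ⟨b, hb, w⟩ := hsep C hxC hC
    exact ⟨b, hBB hb, w⟩) _ _ (by rw [hcard0]; exact hTk) hF0
  obtain ⟨y, hy0, rfl⟩ : ∃ y, y ∉ insert a (T.erase t0) ∧ insert y (insert a (T.erase t0)) = T1 := by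
    have h1 : (T1 \ insert a (T.erase t0)).card = 1 := by
      rw [Finset.card_sdiff_of_subset hsub]; omega
    obtain ⟨y, hy⟩ := Finset.card_eq_one.1 h1
    have hy1 : y ∈ T1 \ insert a (T.erase t0) := by rw [hy]; simp
    refine ⟨y, (Finset.mem_sdiff.1 hy1).2, ?_⟩
    rw [Finset.insert_eq, ← hy, Finset.sdiff_union_of_subset hsub]
  have hya : y ≠ a := fun h => hy0 (by simp [h])
  have hyE : y ∉ T.erase t0 := fun h => hy0 (by simp [h])
  have hyB' : y ∈ B' := (hF1 y (by simp)).1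
  have hEB : ∀ t ∈ T.erase t0, t ∈ B := fun t ht => hTB t (Finset.mem_of_mem_erase ht)
  have ht0B : (t0 : V) ∈ B := hTB t0 t0.2
  have fin : ∀ c, c ∉ T → (∃ s', FanOn G x B (insert (t0 : V) (insert c (T.erase t0))) s') →
      ∃ (T' : Finset V) (s' : V → Set V), T ⊆ T' ∧ T'.card = T.card + 1 ∧ FanOn G x B T' s' := by
    rintro c hc ⟨s', hs'⟩
    rw [Finset.insert_comm, Finset.insert_erase t0.2] at hs'
    exact ⟨_, s', Finset.subset_insert _ _, Finset.card_insert_of_notMem hc, hs'⟩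
  by_cases hyd : y ∈ dr.support
  · apply fin b hbT
    have hsub2 : ∀ z ∈ (dr.dropUntil y hyd).support, z ∈ dr.support := fun z hz =>
      dr.support_dropUntil_subset_support hyd hz
    refine combine G x B B' hBB _ s1 y a t0 b hya hyE haE hF1 hEB ht0B hbB
      (dr.dropUntil y hyd) r ?_ ?_
    · intro z hz
      refine ⟨Or.inr (Or.inl (hsub2 z hz)), hdE z (hsub2 z hz), ?_, hdB z (hsub2 z hz)⟩
      intro hzr
      obtain rfl := hdrr z (hsub2 z hz) hzr
      exact hya (path_split dr hdp hyd z (Walk.start_mem_support _) hz).symm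
    · intro z hz
      exact ⟨Or.inr (Or.inr hz), hrE z hz, hrB z hz⟩
  rw [Finset.insert_comm] at hF1
  by_cases hyr : y ∈ r.support
  · apply fin b hbT
    have hsub2 : ∀ z ∈ (r.dropUntil y hyr).support, z ∈ r.support := fun z hz =>
      r.support_dropUntil_subset_support hyr hz
    refine combine G x B B' hBB _ s1 a y t0 b hya.symm haE hyE hF1 hEB ht0B hbB
      dr (r.dropUntil y hyr) ?_ ?_
    · intro z hz
      refine ⟨Or.inr (Or.inl hz), hdE z hz, ?_, hdB z hz⟩
      intro hzr
      obtain rfl := hdrr z hz (hsub2 z hzr)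
      exact hya (path_split r hrp hyr z (Walk.start_mem_support _) hzr).symm
    · intro z hz
      exact ⟨Or.inr (Or.inr (hsub2 z hz)), hrE z (hsub2 z hz), hrB z (hsub2 z hz)⟩
  · have hyB : y ∈ B := by
      rcases hyB' with h | h | h
      exacts [h, absurd h hyd, absurd h hyr]
    have hyT : y ∉ T := by
      intro h
      refine hyE (Finset.mem_erase.2 ⟨?_, h⟩)
      rintro e
      exact hyd (e ▸ dr.end_mem_support)
    apply fin y hyT
    refine combine G x B B' hBB _ s1 a y t0 y hya.symm haE hyE hF1 hEB ht0B hyB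
      dr Walk.nil ?_ ?_
    · intro z hz
      refine ⟨Or.inr (Or.inl hz), hdE z hz, ?_, hdB z hz⟩
      intro hzr
      have : z = y := by simpa using hzr
      exact hyd (this ▸ hz)
    · intro z hz
      have : z = y := by simpa using hz
      subst this
      exact ⟨hBB hyB, hyE, fun _ => rfl⟩

theorem stmt_2 {V : Type*} [Fintype V] (G : SimpleGraph V) (x : V) (S : Set V)
    (k : ℕ) (hxS : x ∉ S) (h : ¬ HasFan G x S k) :
    ∃ C X : Set V, x ∉ C ∧ C.ncard < k ∧
      X = {y | y ∉ C ∧ ∃ w : G.Walk x y, ∀ z ∈ w.support, z ∉ C} ∧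
      S ∩ X = ∅ ∧ setNbhd G X ⊆ C ∧ (setNbhd G X).ncard < k := by
  classical
  by_cases hsep : ∀ C : Finset V, x ∉ C → C.card < k →
      ∃ b ∈ S, ∃ w : G.Walk x b, ∀ z ∈ w.support, z ∉ C
  · exfalso
    apply h
    have hj : ∀ j ≤ k, ∃ (T : Finset V) (s : V → Set V), T.card = j ∧ FanOn G x S T s := by
      intro j
      induction j with
      | zero => exact fun _ => ⟨∅, fun _ => ∅, rfl, fun t ht => by simp at ht⟩
      | succ j ih =>
        intro hjk
        obtain ⟨T, s, hT, hF⟩ := ih (by omega)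
        obtain ⟨T', s', -, hc, hF'⟩ := augment G x k _ S rfl hxS hsep T s (by omega) hF
        exact ⟨T', s', by omega, hF'⟩
    obtain ⟨T, s, hT, hF⟩ := hj k le_rfl
    let e : Fin k ≃ T := (T.equivFinOfCardEq hT).symm
    choose w hw using fun i : Fin k => (hF (e i) (e i).2).2.1
    have hinj : Function.Injective (fun i => (e i : V)) :=
      Subtype.val_injective.comp e.injective
    refine ⟨fun i => e i, fun i => (w i).bypass, hinj, fun i => (w i).bypass_isPath,
      fun i => (hF (e i) (e i).2).1, ?_⟩
    intro i j hij z hz hz'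
    exact (hF (e i) (e i).2).2.2.2 (e j) (e j).2 (fun q => hij (hinj q)) z
      (hw i z ((w i).support_bypass_subset_support hz)) (hw j z ((w j).support_bypass_subset_support hz'))
  · push Not at hsep
    obtain ⟨C, hxC, hCk, hC⟩ := hsep
    have hN : setNbhd G {y | y ∉ (C : Set V) ∧ ∃ w : G.Walk x y, ∀ z ∈ w.support,
        z ∉ (C : Set V)} ⊆ (C : Set V) := by
      rintro u ⟨hu, v, ⟨hv, w, hw⟩, hadj⟩
      by_contra huC
      refine hu ⟨huC, w.concat hadj, ?_⟩
      intro z hz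
      rw [Walk.support_concat, List.mem_append, List.mem_singleton] at hz
      rcases hz with hz | rfl
      exacts [hw z hz, huC]
    refine ⟨C, _, by simpa using hxC, by simpa using hCk, rfl, ?_, hN, ?_⟩
    · rw [Set.eq_empty_iff_forall_notMem]
      rintro b ⟨hb, -, w, hw⟩
      obtain ⟨z, hz, hzC⟩ := hC b hb w
      exact hw z hz (by simpa using hzC)
    · refine lt_of_le_of_lt (Set.ncard_le_ncard hN (Set.toFinite _)) (by simpa using hCk)
end
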